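/- Fix n ≥ 1 and for each i ∈ {1,…,n} let M₀^{(i)} and M₁^{(i)} be positive semidefinite 2×2 complex matrices with M₀^{(i)} + M₁^{(i)} = I (a per-qubit two-outcome POVM). Consider the adversary who, for uniformly random independent s, r ∈ {0,1}^n, measures the i-th qubit |rᵢ⟩_{sᵢ} with this POVM, obtaining outcomes z₁,…,zₙ, and guesses the parity r₁ ⊕ ⋯ ⊕ rₙ by z₁ ⊕ ⋯ ⊕ zₙ. Then the success probability, namely 4^{−n} · ∑_{s,r ∈ {0,1}^n} ∑_{z ∈ {0,1}^n : z₁⊕⋯⊕zₙ = r₁⊕⋯⊕rₙ} ∏_{i=1}^{n} ⟨rᵢ|_{sᵢ} M_{zᵢ}^{(i)} |rᵢ⟩_{sᵢ}, is at most 1/2 + (1/2)·(√2/2)^n. (This makes precise that, for independent per-qubit measurements, the adversary's probability of guessing the key bit S_{n+1} = R₁ ⊕ ⋯ ⊕ Rₙ is exponentially close in n to that of guessing a random bit.) -/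

import Mathlib

open Matrix
open scoped ComplexOrder

/-- The qubit state `|r⟩ₛ` encoding the classical bit `r` in the standard basis (`s = false`)
or the diagonal basis (`s = true`): `|0⟩₀ = (1,0)`, `|1⟩₀ = (0,1)`, `|0⟩₁ = (1/√2)(1,1)`,
`|1⟩₁ = (1/√2)(1,−1)`. The component at index `false` is the first coordinate. -/
noncomputable def qubit (s r : Bool) : Bool → ℂ := fun t =>
  if s then (if r && t then -((1 / Real.sqrt 2 : ℝ) : ℂ) else ((1 / Real.sqrt 2 : ℝ) : ℂ))
  else (if r = t then 1 else 0)

/-- The parity `r₁ ⊕ ⋯ ⊕ rₙ ∈ ZMod 2` of a bit string. -/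
def parity {n : ℕ} (r : Fin n → Bool) : ZMod 2 := ∑ i, if r i then 1 else 0

/-!
Doubling the indicator of `parity z = parity r` gives `1 + ∏ᵢ (-1)^(rᵢ + zᵢ)`, so twice the triple
sum splits as `∏ᵢ Tᵢ + ∏ᵢ Bᵢ`, where `Tᵢ` and `Bᵢ` are single-qubit sums. The states of each basis
resolve the identity, so `Tᵢ = 2 tr (M₀ + M₁) = 4`. The observable `W = ∑ₛ ∑ᵣ (-1)^r |r⟩ₛ⟨r|ₛ` is
the sum of the Pauli matrices `Z` and `X`, so `W² = 2` and `-√2 ≤ W ≤ √2`, whence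
`|Bᵢ| = |tr (W (M₀ - M₁))| ≤ √2 tr (M₀ + M₁) = 2√2`.
-/

section Parity

variable {n : ℕ}

theorem parity_eq_natCast_sum_toNat (r : Fin n → Bool) :
    parity r = ((∑ i, (r i).toNat : ℕ) : ZMod 2) := by
  rw [parity, Nat.cast_sum]
  refine Finset.sum_congr rfl fun i _ => ?_
  cases r i <;> simp

theorem parity_eq_parity_iff_even (z r : Fin n → Bool) :
    parity z = parity r ↔ Even (∑ i, ((r i).toNat + (z i).toNat)) := by
  rw [← CharTwo.add_eq_zero, parity_eq_natCast_sum_toNat, parity_eq_natCast_sum_toNat,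
    ← Nat.cast_add, ZMod.natCast_eq_zero_iff_even, Finset.sum_add_distrib, add_comm]

theorem two_mul_ite_even {R : Type*} [Ring R] (k : ℕ) (x : R) :
    2 * (if Even k then x else 0) = x + (-1) ^ k * x := by
  by_cases hk : Even k
  · simp [hk, two_mul]
  · simp [hk, (Nat.not_even_iff_odd.mp hk).neg_one_pow]

theorem two_mul_sum_prod_of_parity_eq {R σ : Type*} [CommRing R] [Fintype σ]
    (f : Fin n → σ → Bool → Bool → R) :
    2 * ∑ s : Fin n → σ, ∑ r : Fin n → Bool,
        ∑ z ∈ Finset.univ.filter (fun z : Fin n → Bool => parity z = parity r),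
          ∏ i, f i (s i) (r i) (z i) =
      ∏ i, ∑ s, ∑ r, ∑ z, f i s r z +
        ∏ i, ∑ s, ∑ r, ∑ z, (-1) ^ (r.toNat + z.toNat) * f i s r z := by
  simp only [Fintype.prod_sum, Finset.mul_sum, ← Finset.sum_add_distrib, Finset.sum_filter,
    parity_eq_parity_iff_even, two_mul_ite_even, Finset.prod_mul_distrib,
    Finset.prod_pow_eq_pow_sum]

end Parity

section Trace

theorem dotProduct_mulVec_eq_trace_vecMulVec_mul {m R : Type*} [Fintype m] [CommSemiring R]
    (u v : m → R) (E : Matrix m m R) : u ⬝ᵥ (E *ᵥ v) = (vecMulVec v u * E).trace := by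
  rw [vecMulVec_mul, trace_vecMulVec, dotProduct_mulVec, dotProduct_comm]

variable {m 𝕜 : Type*} [Fintype m] [RCLike 𝕜] {A B W : Matrix m m 𝕜}

theorem trace_mul_nonneg_of_posSemidef (hA : A.PosSemidef) (hB : B.PosSemidef) :
    0 ≤ (A * B).trace := by
  obtain ⟨k, v, rfl⟩ := posSemidef_iff_eq_sum_vecMulVec.mp hB
  rw [trace_mul_comm, Finset.sum_mul, trace_sum]
  refine Finset.sum_nonneg fun j _ => ?_
  rw [← dotProduct_mulVec_eq_trace_vecMulVec_mul]
  exact hA.dotProduct_mulVec_nonneg (v j)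

variable [DecidableEq m] {c : ℝ}

theorem posSemidef_smul_one_sub_of_mul_self_eq (hW : W.IsHermitian) (hc : 0 ≤ c)
    (hsq : W * W = (c ^ 2) • (1 : Matrix m m 𝕜)) : (c • (1 : Matrix m m 𝕜) - W).PosSemidef := by
  obtain rfl | hpos := hc.eq_or_lt
  · have hW0 : W = 0 := conjTranspose_mul_self_eq_zero.mp (by simpa [hW.eq] using hsq)
    simpa [hW0] using PosSemidef.zero
  set V := c • (1 : Matrix m m 𝕜) - W with hVdef
  have hV : V.IsHermitian := (isHermitian_one.smul (IsSelfAdjoint.all c)).sub hW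
  have hVsq : Vᴴ * V = (2 * c) • V := by
    rw [hV.eq, hVdef]
    simp only [sub_mul, mul_sub, hsq, smul_mul_assoc, mul_smul_comm, one_mul, mul_one]
    module
  rw [← inv_smul_smul₀ (by positivity : 2 * c ≠ 0) V, ← hVsq]
  exact (posSemidef_conjTranspose_mul_self V).smul (by positivity)

theorem trace_mul_sub_le (hsub : (c • (1 : Matrix m m 𝕜) - W).PosSemidef)
    (hadd : (c • (1 : Matrix m m 𝕜) + W).PosSemidef) (hA : A.PosSemidef) (hB : B.PosSemidef) :
    (W * (A - B)).trace ≤ c • (A + B).trace := by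
  have h := add_nonneg (trace_mul_nonneg_of_posSemidef hsub hA)
    (trace_mul_nonneg_of_posSemidef hadd hB)
  rw [← sub_nonneg]
  convert h using 1
  simp only [sub_mul, add_mul, mul_sub, smul_mul_assoc, one_mul, trace_sub, trace_add, trace_smul,
    smul_add]
  ring

theorem exists_real_trace_mul_sub_eq (hW : W.IsHermitian) (hc : 0 ≤ c)
    (hsq : W * W = (c ^ 2) • (1 : Matrix m m 𝕜)) (hA : A.PosSemidef) (hB : B.PosSemidef)
    (hAB : A + B = 1) :
    ∃ x : ℝ, (W * (A - B)).trace = x ∧ |x| ≤ c * Fintype.card m := by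
  have hsub := posSemidef_smul_one_sub_of_mul_self_eq hW hc hsq
  have hadd : (c • (1 : Matrix m m 𝕜) + W).PosSemidef := by
    simpa using posSemidef_smul_one_sub_of_mul_self_eq hW.neg hc (by simpa using hsq)
  have hupper := trace_mul_sub_le hsub hadd hA hB
  have hlower := trace_mul_sub_le hsub hadd hB hA
  rw [add_comm B A, ← neg_sub A B, mul_neg, trace_neg] at hlower
  rw [hAB, trace_one, RCLike.real_smul_eq_coe_mul, ← RCLike.ofReal_natCast,
    ← RCLike.ofReal_mul] at hupper hlower
  have hreal : ((RCLike.re (W * (A - B)).trace : ℝ) : 𝕜) = (W * (A - B)).trace :=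
    RCLike.conj_eq_iff_re.mp <| RCLike.conj_eq_iff_im.mpr <| by
      simpa using (RCLike.le_iff_re_im.mp hupper).2
  rw [← hreal, ← RCLike.ofReal_neg, RCLike.ofReal_le_ofReal] at hlower
  rw [← hreal, RCLike.ofReal_le_ofReal] at hupper
  exact ⟨_, hreal.symm, abs_le.mpr ⟨by linarith, hupper⟩⟩

end Trace

section Qubit

theorem ofReal_inv_sqrt_two_mul_self : ((√2 : ℝ) : ℂ)⁻¹ * ((√2 : ℝ) : ℂ)⁻¹ = 1 / 2 := by
  rw [← mul_inv, ← Complex.ofReal_mul, Real.mul_self_sqrt zero_le_two]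
  norm_num

theorem sum_vecMulVec_qubit (s : Bool) :
    ∑ r, vecMulVec (qubit s r) (star (qubit s r)) = 1 := by
  ext a b
  cases s <;> cases a <;> cases b <;>
    norm_num [qubit, vecMulVec_apply, ofReal_inv_sqrt_two_mul_self]

/-- The observable `∑ₛ ∑ᵣ (-1)^r |r⟩ₛ⟨r|ₛ`, summing over both bases the observable that reads off
the encoded bit as a sign. -/
noncomputable def bitObservable : Matrix Bool Bool ℂ :=
  ∑ s, ∑ r, (-1 : ℂ) ^ r.toNat • vecMulVec (qubit s r) (star (qubit s r))

theorem bitObservable_eq_of :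
    bitObservable = of fun a b => if a && b then -1 else 1 := by
  ext a b
  cases a <;> cases b <;>
    norm_num [bitObservable, qubit, vecMulVec_apply, ofReal_inv_sqrt_two_mul_self]

theorem isHermitian_bitObservable : bitObservable.IsHermitian := by
  rw [bitObservable_eq_of]
  ext a b
  cases a <;> cases b <;> simp

theorem bitObservable_mul_self :
    bitObservable * bitObservable = (√2 ^ 2 : ℝ) • (1 : Matrix Bool Bool ℂ) := by
  rw [bitObservable_eq_of, Real.sq_sqrt zero_le_two]
  ext a b
  cases a <;> cases b <;> norm_num [mul_apply]

variable {E : Bool → Matrix Bool Bool ℂ}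

theorem sum_qubit_dotProduct_mulVec (hE : E false + E true = 1) :
    ∑ s, ∑ r, ∑ z, star (qubit s r) ⬝ᵥ (E z *ᵥ qubit s r) = 4 := by
  have hsum : ∑ z, E z = 1 := by rw [Fintype.sum_bool, add_comm, hE]
  simp only [dotProduct_mulVec_eq_trace_vecMulVec_mul, ← trace_sum, ← Finset.mul_sum,
    hsum, sum_vecMulVec_qubit, mul_one, Finset.sum_const, trace_one]
  norm_num

theorem sum_neg_one_pow_mul_qubit_dotProduct_mulVec :
    ∑ s, ∑ r, ∑ z, (-1) ^ (r.toNat + z.toNat) * (star (qubit s r) ⬝ᵥ (E z *ᵥ qubit s r)) =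
      (bitObservable * (E false - E true)).trace := by
  simp only [bitObservable, Finset.sum_mul, trace_sum]
  refine Finset.sum_congr rfl fun s _ => Finset.sum_congr rfl fun r _ => ?_
  simp only [dotProduct_mulVec_eq_trace_vecMulVec_mul, smul_mul_assoc, trace_smul, mul_sub,
    trace_sub, smul_eq_mul, Fintype.sum_bool, Bool.toNat_true, Bool.toNat_false]
  ring

theorem exists_real_bias_abs_le (hpsd : ∀ b, (E b).PosSemidef) (hE : E false + E true = 1) :
    ∃ β : ℝ, ∑ s, ∑ r, ∑ z,
        (-1) ^ (r.toNat + z.toNat) * (star (qubit s r) ⬝ᵥ (E z *ᵥ qubit s r)) = 4 * (β : ℂ) ∧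
      |β| ≤ √2 / 2 := by
  obtain ⟨x, hx, hxle⟩ := exists_real_trace_mul_sub_eq isHermitian_bitObservable
    (Real.sqrt_nonneg 2) bitObservable_mul_self (hpsd false) (hpsd true) hE
  refine ⟨x / 4, ?_, ?_⟩
  · rw [sum_neg_one_pow_mul_qubit_dotProduct_mulVec, hx, RCLike.ofReal_eq_complex_ofReal]
    push_cast
    ring
  · rw [abs_div, abs_of_pos (zero_lt_four' ℝ)]
    rw [Fintype.card_bool, Nat.cast_ofNat] at hxle
    linarith

end Qubit

/-- An adversary measuring each qubit `|rᵢ⟩_{sᵢ}` (for uniformly random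
independent `s, r ∈ {0,1}ⁿ`) with a per-qubit two-outcome POVM `(M₀⁽ⁱ⁾, M₁⁽ⁱ⁾)` and guessing
the parity `r₁ ⊕ ⋯ ⊕ rₙ` by the parity of her outcomes succeeds with probability
`4⁻ⁿ ∑_{s,r} ∑_{z : parity z = parity r} ∏ᵢ ⟨rᵢ|_{sᵢ} M_{zᵢ}⁽ⁱ⁾ |rᵢ⟩_{sᵢ}`,
which is a real number at most `1/2 + (1/2)(√2/2)ⁿ`. -/
theorem stmt_9 (n : ℕ) (hn : 1 ≤ n) (M : Fin n → Bool → Matrix Bool Bool ℂ)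
    (hpsd : ∀ i b, (M i b).PosSemidef) (hsum : ∀ i, M i false + M i true = 1) :
    ∃ t : ℝ,
      ((4 : ℂ) ^ n)⁻¹ *
          (∑ s : Fin n → Bool, ∑ r : Fin n → Bool,
            ∑ z ∈ Finset.univ.filter (fun z : Fin n → Bool => parity z = parity r),
              ∏ i, (star (qubit (s i) (r i)) ⬝ᵥ ((M i (z i)) *ᵥ qubit (s i) (r i))))
        = (t : ℂ)
      ∧ t ≤ 1 / 2 + (1 / 2) * (Real.sqrt 2 / 2) ^ n := by
  choose β hβ hβ_le using fun i => exists_real_bias_abs_le (hpsd i) (hsum i)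
  have hsplit := two_mul_sum_prod_of_parity_eq
    fun i s r z => star (qubit s r) ⬝ᵥ (M i z *ᵥ qubit s r)
  simp only [sum_qubit_dotProduct_mulVec (hsum _), hβ, Finset.prod_mul_distrib, Fin.prod_const]
    at hsplit
  refine ⟨1 / 2 + 1 / 2 * ∏ i, β i, ?_, ?_⟩
  · rw [inv_mul_eq_iff_eq_mul₀ (by positivity)]
    push_cast
    linear_combination hsplit / 2
  · have hprod : ∏ i, β i ≤ (√2 / 2) ^ n := calc
      ∏ i, β i ≤ ∏ i, |β i| := (le_abs_self _).trans_eq (Finset.abs_prod _ _)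
      _ ≤ ∏ _i : Fin n, (√2 / 2) :=
        Finset.prod_le_prod (fun i _ => abs_nonneg _) fun i _ => hβ_le i
      _ = (√2 / 2) ^ n := Fin.prod_const n _
    linarith
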